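/- Let (W,U,N) be a polarity, ε an order type over n, R a g-type relation with order type ε, and 1 ≤ i ≤ n with ε(i) = ∂. Suppose that for every j ≠ i the set Y_j ⊆ U^ε(j) is Galois-stable. Then for every X ⊆ W, R⁰[Ȳⁱ_X] = R⁰[Ȳⁱ_{(X↑)↓}]. (Lemma 3.5, item 2(ii).) -/

import Mathlib

universe u

/-- For `X ⊆ W`, `up N X = X↑ = {u ∈ U : N x u for all x ∈ X}`. -/
def up {W U : Type u} (N : W → U → Prop) (X : Set W) : Set U := {u | ∀ x ∈ X, N x u}

/-- For `Y ⊆ U`, `dn N Y = Y↓ = {w ∈ W : N w u for all u ∈ Y}`. -/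
def dn {W U : Type u} (N : W → U → Prop) (Y : Set U) : Set W := {w | ∀ u ∈ Y, N w u}

/-- A subset `X ⊆ W` is Galois-stable if `X = (X↑)↓`. -/
def stableW {W U : Type u} (N : W → U → Prop) (X : Set W) : Prop := X = dn N (up N X)

/-- A subset `Y ⊆ U` is Galois-stable if `Y = (Y↓)↑`. -/
def stableU {W U : Type u} (N : W → U → Prop) (Y : Set U) : Prop := Y = up N (dn N Y)

/-- `coordType W U b` is `W` if `b = true` (order type 1) and `U` if `b = false` (order type ∂). -/
def coordType (W U : Type u) (b : Bool) : Type u := cond b W U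

/-- `S⁰[C̄] = {a : (a, b̄) ∈ S for all b̄ ∈ C₁ × ⋯ × Cₙ}`. -/
def rel0 {A : Type u} {n : ℕ} {B : Fin n → Type u} (S : A → (∀ i, B i) → Prop)
    (C : ∀ i, Set (B i)) : Set A :=
  {a | ∀ b : ∀ i, B i, (∀ i, b i ∈ C i) → S a b}

/-- `Sⁱ[A', C̄ⁱ] = {x ∈ B i : (a, b̄ⁱ_x) ∈ S for all a ∈ A' and all b_j ∈ C_j (j ≠ i)}`
(the `i`-th entry of `C` is ignored). -/
def reli {A : Type u} {n : ℕ} {B : Fin n → Type u} (S : A → (∀ i, B i) → Prop)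
    (i : Fin n) (A' : Set A) (C : ∀ j, Set (B j)) : Set (B i) :=
  {x | ∀ a ∈ A', ∀ b : ∀ j, B j, (∀ j, j ≠ i → b j ∈ C j) → S a (Function.update b i x)}

/-- Galois-stability for a subset of `U^ε(i)` (as a subset of `U` or of `W` accordingly). -/
def coordStableG {W U : Type u} (N : W → U → Prop) :
    (b : Bool) → Set (coordType U W b) → Prop
  | true, Y => stableU N Y
  | false, X => stableW N X

/-- `R` is a g-type relation with order type `ε`: `R ⊆ W × U^ε(1) × ⋯ × U^ε(n)` such that the
sets `R⁰[{ū}]` and `Rⁱ[{w}, {ū}ⁱ]` are all Galois-stable. -/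
def isGType {W U : Type u} (N : W → U → Prop) {n : ℕ} (ε : Fin n → Bool)
    (R : W → (∀ i, coordType U W (ε i)) → Prop) : Prop :=
  (∀ v : ∀ i, coordType U W (ε i),
    stableW N (rel0 R fun i => ({v i} : Set (coordType U W (ε i))))) ∧
  (∀ (w : W) (v : ∀ i, coordType U W (ε i)) (i : Fin n),
    coordStableG N (ε i) (reli R i {w} fun j => ({v j} : Set (coordType U W (ε j)))))

/-- The Galois closure on subsets of `U^ε(i)`: `(·↓)↑` on subsets of `U`, `(·↑)↓` on subsets
of `W`. -/
def coordClG {W U : Type u} (N : W → U → Prop) :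
    (b : Bool) → Set (coordType U W b) → Set (coordType U W b)
  | true, Y => up N (dn N Y)
  | false, X => dn N (up N X)

theorem subset_coordClG {W U : Type u} (N : W → U → Prop) (b : Bool)
    (X : Set (coordType U W b)) : X ⊆ coordClG N b X := by
  cases b with
  | true => exact fun x hx w hw => hw x hx
  | false => exact fun x hx u hu => hu x hx

theorem coordClG_subset_of_coordStableG {W U : Type u} (N : W → U → Prop) (b : Bool)
    {X Z : Set (coordType U W b)} (hZ : coordStableG N b Z) (hXZ : X ⊆ Z) :
    coordClG N b X ⊆ Z := by
  cases b with
  | true =>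
    intro x hx
    have hZ' : Z = up N (dn N Z) := hZ
    rw [hZ']
    exact fun w hw => hx w fun z hz => hw z (hXZ hz)
  | false =>
    intro x hx
    have hZ' : Z = dn N (up N Z) := hZ
    rw [hZ']
    exact fun u hu => hx u fun z hz => hu z (hXZ hz)

theorem rel0_anti {A : Type u} {n : ℕ} {B : Fin n → Type u} (S : A → (∀ i, B i) → Prop)
    {C D : ∀ i, Set (B i)} (hCD : ∀ i, C i ⊆ D i) : rel0 S D ⊆ rel0 S C :=
  fun _ ha b hb => ha b fun i => hCD i (hb i)

theorem mem_reli_singleton {A : Type u} {n : ℕ} {B : Fin n → Type u}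
    (S : A → (∀ i, B i) → Prop) (i : Fin n) (a : A) (v : ∀ j, B j) (x : B i) :
    x ∈ reli S i {a} (fun j => ({v j} : Set (B j))) ↔ S a (Function.update v i x) := by
  constructor
  · exact fun h => h a rfl v fun _ _ => rfl
  · rintro h _ rfl b hb
    have hbv : Function.update b i x = Function.update v i x := by
      funext j
      by_cases hj : j = i
      · subst hj
        simp
      · simpa [hj] using hb j hj
    rwa [hbv]

/-- Lemma 3.5, item 2(ii): if `ε(i) = ∂` and `Y_j` is Galois-stable for all `j ≠ i`, then for
every `X ⊆ W`, `R⁰[Ȳⁱ_X] = R⁰[Ȳⁱ_{(X↑)↓}]`. -/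
theorem gType_rel0_closure_partial {W U : Type u} (N : W → U → Prop) {n : ℕ} (ε : Fin n → Bool)
    (R : W → (∀ i, coordType U W (ε i)) → Prop) (hR : isGType N ε R)
    (i : Fin n) (hi : ε i = false)
    (Y : ∀ j, Set (coordType U W (ε j)))
    (hY : ∀ j, j ≠ i → coordStableG N (ε j) (Y j))
    (X : Set (coordType U W (ε i))) :
    rel0 R (Function.update Y i X) = rel0 R (Function.update Y i (coordClG N (ε i) X)) := by
  apply Set.Subset.antisymm
  · intro w hw v hv
    have hX : X ⊆ reli R i {w} (fun j => ({v j} : Set (coordType U W (ε j)))) := by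
      intro x hx
      rw [mem_reli_singleton]
      refine hw _ fun j => ?_
      by_cases hj : j = i
      · subst hj
        simpa using hx
      · simpa [hj] using hv j
    have hvi : v i ∈ coordClG N (ε i) X := by simpa using hv i
    have hmem := coordClG_subset_of_coordStableG N (ε i) (hR.2 w v i) hX hvi
    rwa [mem_reli_singleton, Function.update_eq_self] at hmem
  · refine rel0_anti R fun j => ?_
    by_cases hj : j = i
    · subst hj
      simpa using subset_coordClG N (ε j) X
    · simp [hj]
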